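/- Let d ≥ 2 be an integer, let V be a set, and let c be a 2-coloring of the complete digraph on V such that c(v,v) = red for all v ∈ V and there are no two distinct vertices u,v ∈ V with c(u,v) = c(v,u) = blue. Then V can be covered by at most d red d-dominating sets. -/

import Mathlib

/-- The two colors for 2-colorings of complete digraphs. -/
inductive Color where
  | red : Color
  | blue : Color

/-- `U'` is a red `d`-dominating set: every finite `S ⊆ U'` with `1 ≤ |S| ≤ d` has a
common red out-neighbor inside `U'`. -/
def IsRedDom {V : Type*} (c : V → V → Color) (d : ℕ) (U' : Set V) : Prop :=
  ∀ S : Finset V, ↑S ⊆ U' → S.Nonempty → S.card ≤ d →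
    ∃ w ∈ U', ∀ s ∈ S, c s w = Color.red

/- If `V` is not red `d`-dominating, some set `S` of at most `d` vertices has no common red
out-neighbor: every vertex `w` receives a non-red edge from some `s ∈ S`, and hence sends a red edge
back to `s`. So the red in-neighborhoods of the members of `S` cover `V`, and each of them is
dominated by its own center, which belongs to it because loops are red. -/

section RedDominating

variable {V : Type*} {c : V → V → Color}

/-- The red in-neighborhood of `v`: the vertices that send a red edge to `v`. These are the sets of
the cover when `V` itself is not red `d`-dominating. -/
def redInNbhd (c : V → V → Color) (v : V) : Set V :=
  {u | c u v = Color.red}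

theorem mem_redInNbhd {u v : V} : u ∈ redInNbhd c v ↔ c u v = Color.red :=
  Iff.rfl

theorem isRedDom_of_subset_redInNbhd {U : Set V} {v : V} (hv : v ∈ U) (hU : U ⊆ redInNbhd c v)
    (d : ℕ) : IsRedDom c d U :=
  fun _ hS _ _ => ⟨v, hv, fun _ hs => mem_redInNbhd.mp (hU (hS hs))⟩

theorem Color.eq_red_of_ne_blue : ∀ {a : Color}, a ≠ Color.blue → a = Color.red
  | .red, _ => rfl
  | .blue, h => absurd rfl h

theorem red_or_red_of_not_blue_and_blue (hloop : ∀ v, c v v = Color.red)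
    (hblue : ∀ u v, u ≠ v → ¬(c u v = Color.blue ∧ c v u = Color.blue)) (u v : V) :
    c u v = Color.red ∨ c v u = Color.red := by
  obtain rfl | huv := eq_or_ne u v
  · exact .inl (hloop u)
  · exact (not_and_or.mp (hblue u v huv)).imp Color.eq_red_of_ne_blue Color.eq_red_of_ne_blue

theorem exists_finset_subset_biUnion_redInNbhd_of_not_isRedDom
    (hred : ∀ u v, c u v = Color.red ∨ c v u = Color.red) {d : ℕ} {U : Set V}
    (hU : ¬IsRedDom c d U) :
    ∃ S : Finset V, ↑S ⊆ U ∧ S.card ≤ d ∧ U ⊆ ⋃ s ∈ S, redInNbhd c s := by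
  unfold IsRedDom at hU
  push Not at hU
  obtain ⟨S, hSU, -, hcard, hS⟩ := hU
  refine ⟨S, hSU, hcard, fun w hw => ?_⟩
  obtain ⟨s, hs, hsw⟩ := hS w hw
  exact Set.mem_biUnion hs (mem_redInNbhd.mpr ((hred s w).resolve_left hsw))

end RedDominating

/-- Lemma (f(1,d) ≤ d): if all loops are red and no two distinct vertices are joined
by blue edges in both directions, then `V` can be covered by at most `d` red
`d`-dominating sets. -/
theorem cover_by_d_red_dominating {V : Type*} (d : ℕ) (hd : 2 ≤ d)
    (c : V → V → Color)
    (hloop : ∀ v : V, c v v = Color.red)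
    (hblue : ∀ u v : V, u ≠ v → ¬(c u v = Color.blue ∧ c v u = Color.blue)) :
    ∃ n : ℕ, n ≤ d ∧ ∃ W : Fin n → Set V,
      (⋃ i, W i) = Set.univ ∧ ∀ i, IsRedDom c d (W i) := by
  by_cases hV : IsRedDom c d Set.univ
  · exact ⟨1, by omega, fun _ => Set.univ, Set.iUnion_const _, fun _ => hV⟩
  · obtain ⟨S, -, hcard, hcover⟩ := exists_finset_subset_biUnion_redInNbhd_of_not_isRedDom
      (red_or_red_of_not_blue_and_blue hloop hblue) hV
    refine ⟨S.card, hcard, fun i => redInNbhd c (S.equivFin.symm i), ?_, fun i =>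
      isRedDom_of_subset_redInNbhd (mem_redInNbhd.mpr (hloop _)) subset_rfl d⟩
    calc ⋃ i, redInNbhd c (S.equivFin.symm i)
        = ⋃ s : S, redInNbhd c s :=
          S.equivFin.symm.surjective.iUnion_comp fun s : S => redInNbhd c s
      _ = ⋃ s ∈ S, redInNbhd c s := Set.iUnion_subtype _ _
      _ = Set.univ := Set.univ_subset_iff.mp hcover
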